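/- Let B_m : ℝ³ → ℝ (m ∈ ℤ) be smooth functions of (x, y, t) such that for every m ∈ ℤ the first three flows of the Volterra hierarchy hold: ∂_x B_m = B_m (B_{m+1} − B_{m−1}), ∂_y B_m = B_m (V4_{m+1} − V4_{m−1}), and ∂_t B_m = B_m (V6_{m+1} − V6_{m−1}). Then for every n ∈ ℤ the function φ := B_n is a solution of the modified Kadomtsev–Petviashvili equation: setting ψ := B_{n−1} and ξ := φ² + 2 φ ψ + ∂_x φ, one has ∂_y φ = ∂_x ξ and 4 ∂_t φ = 6 (∂_x φ)(ξ − φ²) + ∂_x³ φ + 3 ∂_y ξ. -/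

import Mathlib

/-!
Evaluation `b_m ↦ B m` turns the derivations of `ℤ[b_m : m ∈ ℤ]` given by the three Volterra flows
into `∂/∂x`, `∂/∂y` and `∂/∂t`, so it suffices to prove the equations for derivations `∂x`, `∂y`,
`∂t` of a commutative ring. There every flow is an `x`-derivative, `∂y b_m = ∂x V4_m` and
`∂t b_m = ∂x V6_m`, and the first flow gives
`V4_m = b_m² + 2 b_m b_{m-1} + ∂x b_m = b_m² + 2 b_m b_{m+1} - ∂x b_m`.
The first of these forms says `ξ = V4_n`. Using the first at `m = n + 1` and the second at
`m = n - 1` eliminates all `b_m` other than `b_{n-1}`, `b_n`, `b_{n+1}`, and the modified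
Kadomtsev–Petviashvili equation becomes an instance of the Leibniz rule.
-/

section Algebra

variable {R A : Type*} [CommSemiring R] [CommRing A] [Algebra R A]

/-- The density `V4` of the second Volterra flow of a family `b`. -/
def volterraV4 (b : ℤ → A) (m : ℤ) : A :=
  b m * (b (m - 1) + b m + b (m + 1))

/-- The density `V6` of the third Volterra flow of a family `b`. -/
def volterraV6 (b : ℤ → A) (m : ℤ) : A :=
  b m * (b (m - 1) * b (m + 1)
    + volterraV4 b (m - 1) + volterraV4 b m + volterraV4 b (m + 1))

theorem map_volterraV4 {A' F : Type*} [CommRing A'] [FunLike F A A'] [RingHomClass F A A'] (f : F)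
    (b : ℤ → A) (m : ℤ) : f (volterraV4 b m) = volterraV4 (fun k => f (b k)) m := by
  simp only [volterraV4, map_mul, map_add]

theorem map_volterraV6 {A' F : Type*} [CommRing A'] [FunLike F A A'] [RingHomClass F A A'] (f : F)
    (b : ℤ → A) (m : ℤ) : f (volterraV6 b m) = volterraV6 (fun k => f (b k)) m := by
  simp only [volterraV6, map_volterraV4, map_mul, map_add]

theorem derivation_ofNat (D : Derivation R A A) (k : ℕ) [k.AtLeastTwo] : D ofNat(k) = 0 :=
  D.map_natCast k

theorem derivation_ofNat_mul (D : Derivation R A A) (k : ℕ) [k.AtLeastTwo] (a : A) :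
    D (ofNat(k) * a) = ofNat(k) * D a := by
  simp only [Derivation.leibniz, derivation_ofNat, smul_eq_mul, mul_zero, add_zero]

/-- The derivation `D` is the Volterra flow of the family `b` with density `V`; the first three
flows of the hierarchy have densities `b`, `volterraV4 b` and `volterraV6 b`. -/
def IsVolterraFlow (D : Derivation R A A) (b V : ℤ → A) : Prop :=
  ∀ m, D (b m) = b m * (V (m + 1) - V (m - 1))

namespace IsVolterraFlow

variable {Dx Dy Dt : Derivation R A A} {b : ℤ → A}

theorem volterraV4_eq_add (hx : IsVolterraFlow Dx b b) (m : ℤ) :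
    volterraV4 b m = b m ^ 2 + 2 * b m * b (m - 1) + Dx (b m) := by
  rw [hx m, volterraV4]
  ring

theorem volterraV4_eq_sub (hx : IsVolterraFlow Dx b b) (m : ℤ) :
    volterraV4 b m = b m ^ 2 + 2 * b m * b (m + 1) - Dx (b m) := by
  rw [hx m, volterraV4]
  ring

theorem firstFlow_volterraV4 (hx : IsVolterraFlow Dx b b) (m : ℤ) :
    Dx (volterraV4 b m) = b m * (volterraV4 b (m + 1) - volterraV4 b (m - 1)) := by
  simp only [volterraV4, Derivation.leibniz, map_add, smul_eq_mul, hx _]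
  ring_nf

theorem firstFlow_volterraV6 (hx : IsVolterraFlow Dx b b) (m : ℤ) :
    Dx (volterraV6 b m) = b m * (volterraV6 b (m + 1) - volterraV6 b (m - 1)) := by
  simp only [volterraV6, Derivation.leibniz, map_add, smul_eq_mul, hx.firstFlow_volterraV4, hx _]
  simp only [volterraV4]
  ring_nf

theorem secondFlow_eq_firstFlow (hx : IsVolterraFlow Dx b b)
    (hy : IsVolterraFlow Dy b (volterraV4 b)) (m : ℤ) : Dy (b m) = Dx (volterraV4 b m) :=
  (hy m).trans (hx.firstFlow_volterraV4 m).symm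

theorem thirdFlow_eq_firstFlow (hx : IsVolterraFlow Dx b b)
    (ht : IsVolterraFlow Dt b (volterraV6 b)) (m : ℤ) : Dt (b m) = Dx (volterraV6 b m) :=
  (ht m).trans (hx.firstFlow_volterraV6 m).symm

theorem four_mul_volterraV6 (hx : IsVolterraFlow Dx b b) (n : ℤ) :
    4 * volterraV6 b n = Dx (Dx (b n)) + 4 * b n ^ 3
      + 3 * (b n * ((b (n - 1) + b (n + 1)) ^ 2 + 4 * b n * (b (n - 1) + b (n + 1))
        + Dx (b (n + 1) - b (n - 1)))) := by
  have hDDx : Dx (Dx (b n)) =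
      b n * ((b (n + 1) - b (n - 1)) ^ 2 + Dx (b (n + 1) - b (n - 1))) := by
    rw [hx n, Derivation.leibniz, hx n]
    simp only [smul_eq_mul]
    ring
  have hright := hx.volterraV4_eq_add (n + 1)
  have hleft := hx.volterraV4_eq_sub (n - 1)
  simp only [add_sub_cancel_right, sub_add_cancel] at hright hleft
  rw [volterraV6, hright, hleft, hDDx, volterraV4, map_sub]
  ring

-- The argument of the outer `Dx` is the one occurring in `four_mul_volterraV6`, so that the two
-- cancel in `modifiedKP`.
theorem secondFlow_volterraV4 (hx : IsVolterraFlow Dx b b)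
    (hy : IsVolterraFlow Dy b (volterraV4 b)) (n : ℤ) :
    Dy (volterraV4 b n) = 4 * b n ^ 2 * Dx (b n)
      - 2 * Dx (b n) * (b n * (b (n - 1) + b (n + 1)))
      + Dx (b n * ((b (n - 1) + b (n + 1)) ^ 2 + 4 * b n * (b (n - 1) + b (n + 1))
        + Dx (b (n + 1) - b (n - 1)))) := by
  have hcentre : Dy (b n) = Dx (b n * (b (n - 1) + b n + b (n + 1))) :=
    hx.secondFlow_eq_firstFlow hy n
  have hright : Dy (b (n + 1)) =
      Dx (b (n + 1) ^ 2 + 2 * b (n + 1) * b n + Dx (b (n + 1))) := by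
    rw [hx.secondFlow_eq_firstFlow hy, hx.volterraV4_eq_add, add_sub_cancel_right]
  have hleft : Dy (b (n - 1)) =
      Dx (b (n - 1) ^ 2 + 2 * b (n - 1) * b n - Dx (b (n - 1))) := by
    rw [hx.secondFlow_eq_firstFlow hy, hx.volterraV4_eq_sub, sub_add_cancel]
  simp only [volterraV4, sq, Derivation.leibniz, derivation_ofNat, map_add, map_sub,
    smul_eq_mul] at hcentre hright hleft ⊢
  linear_combination (b (n - 1) + 2 * b n + b (n + 1)) * hcentre + b n * hright + b n * hleft
    - (Dx (b (n + 1)) - Dx (b (n - 1))) * hx n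

theorem modifiedKP (hx : IsVolterraFlow Dx b b) (hy : IsVolterraFlow Dy b (volterraV4 b))
    (ht : IsVolterraFlow Dt b (volterraV6 b)) (n : ℤ) :
    4 * Dt (b n) = 6 * Dx (b n) * (volterraV4 b n - b n ^ 2) + Dx (Dx (Dx (b n)))
      + 3 * Dy (volterraV4 b n) := by
  have hthird : 4 * Dt (b n) = Dx (4 * volterraV6 b n) := by
    rw [hx.thirdFlow_eq_firstFlow ht, derivation_ofNat_mul]
  have hcube : Dx (4 * b n ^ 3) = 3 * (4 * b n ^ 2 * Dx (b n)) := by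
    simp only [derivation_ofNat_mul, Derivation.leibniz_pow, nsmul_eq_mul, smul_eq_mul,
      Nat.cast_ofNat, Nat.reduceSub]
    ring
  rw [hthird, hx.four_mul_volterraV6, hx.secondFlow_volterraV4 hy, map_add, map_add, hcube,
    derivation_ofNat_mul, volterraV4]
  ring

end IsVolterraFlow

end Algebra

section Evaluation

open MvPolynomial

/-- The derivation of `R[b_m : m ∈ ℤ]` which is the Volterra flow of the variables `b_m` with
density `V`. -/
noncomputable def volterraDerivation {R : Type*} [CommRing R] (V : ℤ → MvPolynomial ℤ R) :
    Derivation R (MvPolynomial ℤ R) (MvPolynomial ℤ R) :=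
  mkDerivation R fun m => X m * (V (m + 1) - V (m - 1))

theorem isVolterraFlow_volterraDerivation {R : Type*} [CommRing R] (V : ℤ → MvPolynomial ℤ R) :
    IsVolterraFlow (volterraDerivation V) X V :=
  mkDerivation_X R _

variable {𝕜 𝔸 : Type*} [NontriviallyNormedField 𝕜] [NormedCommRing 𝔸] [NormedAlgebra 𝕜 𝔸]

theorem hasDerivAt_aeval_of_derivation {R σ : Type*} [CommSemiring R] [Algebra R 𝔸]
    (D : Derivation R (MvPolynomial σ R) (MvPolynomial σ R)) {u : 𝕜 → σ → 𝔸} {s : 𝕜}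
    (hu : ∀ i, HasDerivAt (fun s' => u s' i) (aeval (u s) (D (X i))) s) (P : MvPolynomial σ R) :
    HasDerivAt (fun s' => aeval (u s') P) (aeval (u s) (D P)) s := by
  induction P using MvPolynomial.induction_on with
  | C r => simpa only [aeval_C, derivation_C, map_zero] using hasDerivAt_const s (algebraMap R 𝔸 r)
  | add P Q hP hQ => simpa only [map_add] using hP.fun_add hQ
  | mul_X P i hP =>
    simpa only [map_mul, map_add, aeval_X, Derivation.leibniz, smul_eq_mul, mul_comm, add_comm]
      using hP.fun_mul (hu i)

theorem hasDerivAt_aeval_of_volterraFlow {R : Type*} [CommRing R] [Algebra R 𝔸]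
    {u : 𝕜 → ℤ → 𝔸} {s : 𝕜} {V : ℤ → MvPolynomial ℤ R}
    (hu : ∀ m, HasDerivAt (fun s' => u s' m)
      (u s m * (aeval (u s) (V (m + 1)) - aeval (u s) (V (m - 1)))) s) (P : MvPolynomial ℤ R) :
    HasDerivAt (fun s' => aeval (u s') P) (aeval (u s) (volterraDerivation V P)) s :=
  hasDerivAt_aeval_of_derivation _ (fun m => by
    simpa only [isVolterraFlow_volterraDerivation V m, map_mul, map_sub, aeval_X] using hu m) P

theorem IsVolterraFlow.modifiedKP_deriv {R A F : Type*} [CommSemiring R] [CommRing A] [Algebra R A]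
    [FunLike F A 𝔸] [RingHomClass F A 𝔸] {Dx Dy Dt : Derivation R A A} {b : ℤ → A}
    (hx : IsVolterraFlow Dx b b) (hy : IsVolterraFlow Dy b (volterraV4 b))
    (ht : IsVolterraFlow Dt b (volterraV6 b)) {ev : 𝕜 → 𝕜 → 𝕜 → F}
    (ev_x : ∀ a x y t, deriv (fun x' => ev x' y t a) x = ev x y t (Dx a))
    (ev_y : ∀ a x y t, deriv (fun y' => ev x y' t a) y = ev x y t (Dy a))
    (ev_t : ∀ a x y t, deriv (fun t' => ev x y t' a) t = ev x y t (Dt a))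
    (n : ℤ) (x y t : 𝕜) :
    deriv (fun y' => ev x y' t (b n)) y = deriv (fun x' => ev x' y t (volterraV4 b n)) x ∧
    4 * deriv (fun t' => ev x y t' (b n)) t =
      6 * deriv (fun x' => ev x' y t (b n)) x * (ev x y t (volterraV4 b n) - ev x y t (b n) ^ 2)
        + deriv (fun x' => deriv (fun x'' => deriv (fun x''' => ev x''' y t (b n)) x'') x') x
        + 3 * deriv (fun y' => ev x y' t (volterraV4 b n)) y := by
  simp only [ev_x, ev_y, ev_t]
  constructor
  · rw [hx.secondFlow_eq_firstFlow hy]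
  · simpa only [map_add, map_sub, map_mul, map_pow, map_ofNat] using
      congrArg (ev x y t) (hx.modifiedKP hy ht n)

end Evaluation

open MvPolynomial in
theorem volterra_solves_mKP_general {𝕜 𝔸 : Type*} [NontriviallyNormedField 𝕜]
    [NormedCommRing 𝔸] [NormedAlgebra 𝕜 𝔸]
    (B V4 V6 : ℤ → 𝕜 → 𝕜 → 𝕜 → 𝔸)
    (hV4 : ∀ (m : ℤ) (x y t : 𝕜),
      V4 m x y t = B m x y t * (B (m - 1) x y t + B m x y t + B (m + 1) x y t))
    (hV6 : ∀ (m : ℤ) (x y t : 𝕜),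
      V6 m x y t = B m x y t *
        (B (m - 1) x y t * B (m + 1) x y t
          + V4 (m - 1) x y t + V4 m x y t + V4 (m + 1) x y t))
    (hx : ∀ (m : ℤ) (x y t : 𝕜), HasDerivAt (fun x' => B m x' y t)
      (B m x y t * (B (m + 1) x y t - B (m - 1) x y t)) x)
    (hy : ∀ (m : ℤ) (x y t : 𝕜), HasDerivAt (fun y' => B m x y' t)
      (B m x y t * (V4 (m + 1) x y t - V4 (m - 1) x y t)) y)
    (ht : ∀ (m : ℤ) (x y t : 𝕜), HasDerivAt (fun t' => B m x y t')
      (B m x y t * (V6 (m + 1) x y t - V6 (m - 1) x y t)) t)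
    (n : ℤ)
    (ξ : 𝕜 → 𝕜 → 𝕜 → 𝔸)
    (hξ : ∀ x y t : 𝕜,
      ξ x y t = B n x y t ^ 2 + 2 * B n x y t * B (n - 1) x y t
        + deriv (fun x' => B n x' y t) x) :
    (∀ x y t : 𝕜,
      deriv (fun y' => B n x y' t) y = deriv (fun x' => ξ x' y t) x)
    ∧
    (∀ x y t : 𝕜,
      4 * deriv (fun t' => B n x y t') t =
        6 * deriv (fun x' => B n x' y t) x * (ξ x y t - B n x y t ^ 2)
          + deriv (fun x' => deriv (fun x'' => deriv (fun x''' => B n x''' y t) x'') x') x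
          + 3 * deriv (fun y' => ξ x y' t) y) := by
  obtain rfl : V4 = fun m x y t => volterraV4 (fun k => B k x y t) m := by
    funext m x y t
    exact hV4 m x y t
  obtain rfl : V6 = fun m x y t => volterraV6 (fun k => B k x y t) m := by
    funext m x y t
    exact hV6 m x y t
  obtain rfl : ξ = fun x y t => volterraV4 (fun k => B k x y t) n := by
    funext x y t
    rw [hξ, (hx n x y t).deriv, volterraV4]
    ring
  have h := IsVolterraFlow.modifiedKP_deriv (ev := fun x y t => aeval (R := ℤ) fun m => B m x y t)
    (isVolterraFlow_volterraDerivation X) (isVolterraFlow_volterraDerivation (volterraV4 X))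
    (isVolterraFlow_volterraDerivation (volterraV6 X))
    (fun P x y t => (hasDerivAt_aeval_of_volterraFlow (fun m => by
      simpa only [aeval_X] using hx m x y t) P).deriv)
    (fun P x y t => (hasDerivAt_aeval_of_volterraFlow (fun m => by
      simpa only [map_volterraV4, aeval_X] using hy m x y t) P).deriv)
    (fun P x y t => (hasDerivAt_aeval_of_volterraFlow (fun m => by
      simpa only [map_volterraV6, aeval_X] using ht m x y t) P).deriv) n
  simp only [map_volterraV4, aeval_X] at h
  exact ⟨fun x y t => (h x y t).1, fun x y t => (h x y t).2⟩

theorem differentiable_partials {𝕜 E : Type*} [NontriviallyNormedField 𝕜] [NormedAddCommGroup E]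
    [NormedSpace 𝕜 E] {f : 𝕜 → 𝕜 → 𝕜 → E}
    (hf : Differentiable 𝕜 fun p : 𝕜 × 𝕜 × 𝕜 => f p.1 p.2.1 p.2.2) (x y t : 𝕜) :
    DifferentiableAt 𝕜 (fun x' => f x' y t) x ∧ DifferentiableAt 𝕜 (fun y' => f x y' t) y ∧
      DifferentiableAt 𝕜 (fun t' => f x y t') t :=
  ⟨(hf (x, y, t)).comp x (f := fun x' => (x', y, t)) (by fun_prop),
    (hf (x, y, t)).comp y (f := fun y' => (x, y', t)) (by fun_prop),
    (hf (x, y, t)).comp t (f := fun t' => (x, y, t')) (by fun_prop)⟩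

/-- If the family `B m` solves the first three flows of the Volterra
hierarchy (with respect to `x = t₂`, `y = t₄`, `t = t₆`), then for every `n` the function
`φ = B n` solves the modified Kadomtsev–Petviashvili equation, with
`ξ = φ² + 2 φ ψ + ∂ₓ φ` and `ψ = B (n-1)`. -/
theorem volterra_solves_mKP
    (B V4 V6 : ℤ → ℝ → ℝ → ℝ → ℝ)
    (hB : ∀ m : ℤ, ContDiff ℝ (⊤ : ℕ∞) (fun p : ℝ × ℝ × ℝ => B m p.1 p.2.1 p.2.2))
    (hV4 : ∀ (m : ℤ) (x y t : ℝ),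
      V4 m x y t = B m x y t * (B (m - 1) x y t + B m x y t + B (m + 1) x y t))
    (hV6 : ∀ (m : ℤ) (x y t : ℝ),
      V6 m x y t = B m x y t *
        (B (m - 1) x y t * B (m + 1) x y t
          + V4 (m - 1) x y t + V4 m x y t + V4 (m + 1) x y t))
    (hx : ∀ (m : ℤ) (x y t : ℝ),
      deriv (fun x' => B m x' y t) x = B m x y t * (B (m + 1) x y t - B (m - 1) x y t))
    (hy : ∀ (m : ℤ) (x y t : ℝ),
      deriv (fun y' => B m x y' t) y = B m x y t * (V4 (m + 1) x y t - V4 (m - 1) x y t))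
    (ht : ∀ (m : ℤ) (x y t : ℝ),
      deriv (fun t' => B m x y t') t = B m x y t * (V6 (m + 1) x y t - V6 (m - 1) x y t))
    (n : ℤ)
    (ξ : ℝ → ℝ → ℝ → ℝ)
    (hξ : ∀ x y t : ℝ,
      ξ x y t = B n x y t ^ 2 + 2 * B n x y t * B (n - 1) x y t
        + deriv (fun x' => B n x' y t) x) :
    (∀ x y t : ℝ,
      deriv (fun y' => B n x y' t) y = deriv (fun x' => ξ x' y t) x)
    ∧
    (∀ x y t : ℝ,
      4 * deriv (fun t' => B n x y t') t =
        6 * deriv (fun x' => B n x' y t) x * (ξ x y t - B n x y t ^ 2)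
          + deriv (fun x' => deriv (fun x'' => deriv (fun x''' => B n x''' y t) x'') x') x
          + 3 * deriv (fun y' => ξ x y' t) y) := by
  have hpartial m := differentiable_partials ((hB m).differentiable (by simp))
  exact volterra_solves_mKP_general B V4 V6 hV4 hV6
    (fun m x y t => hx m x y t ▸ (hpartial m x y t).1.hasDerivAt)
    (fun m x y t => hy m x y t ▸ (hpartial m x y t).2.1.hasDerivAt)
    (fun m x y t => ht m x y t ▸ (hpartial m x y t).2.2.hasDerivAt) n ξ hξ
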